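/- arXiv:math/0010190 — 9 statements merged into one kernel-verified Lean document; each statement's English description precedes it below -/
import Mathlib

section
/- Suppose in addition that S is invertible. Then there exists a skewsymmetric n×n real matrix A satisfying the BD equations if and only if τ preserves S and τ has no cycles (i.e., (Γ₁, Γ₂, τ) is a Belavin–Drinfeld triple). -/
theorem bd_unique {n : ℕ} {Γ₁ Γ₂ : Set (Fin n)} {τ : Fin n → Fin n} (hτ : Set.BijOn τ Γ₁ Γ₂)
    (p q : Fin n) (hp : p ∉ Γ₂) (hq : q ∉ Γ₂) : ∀ k l : ℕ, (∀ j < k, τ^[j] p ∈ Γ₁) →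
    (∀ j < l, τ^[j] q ∈ Γ₁) → τ^[k] p = τ^[l] q → p = q ∧ k = l := by
  intro k
  induction k with
  | zero =>
    intro l _ hl h
    cases l with
    | zero => exact ⟨by simpa using h, rfl⟩
    | succ l =>
      rw [Function.iterate_succ_apply'] at h
      exact absurd (show τ^[0] p ∈ Γ₂ from h ▸ hτ.mapsTo (hl l (by omega))) hp
  | succ k ih =>
    intro l hk hl h
    cases l with
    | zero =>
      rw [Function.iterate_succ_apply'] at h
      exact absurd (show τ^[0] q ∈ Γ₂ from h ▸ hτ.mapsTo (hk k (by omega))) hq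
    | succ l =>
      rw [Function.iterate_succ_apply', Function.iterate_succ_apply'] at h
      have := ih l (fun j hj => hk j (by omega)) (fun j hj => hl j (by omega))
        (hτ.injOn (hk k (by omega)) (hl l (by omega)) h)
      exact ⟨this.1, by rw [this.2]⟩

theorem bd_exists {n : ℕ} {Γ₁ Γ₂ : Set (Fin n)} {τ : Fin n → Fin n} (hτ : Set.BijOn τ Γ₁ Γ₂)
    (hc : ∀ i ∈ Γ₁, ∀ k : ℕ, 1 ≤ k → (∀ j < k, τ^[j] i ∈ Γ₁) → τ^[k] i ≠ i) (x : Fin n) :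
    ∃ p : Fin n, ∃ k : ℕ, p ∉ Γ₂ ∧ (∀ j < k, τ^[j] p ∈ Γ₁) ∧ τ^[k] p = x := by
  by_contra! H
  have P : ∀ k : ℕ, ∃ y, (∀ j < k, τ^[j] y ∈ Γ₁) ∧ τ^[k] y = x := by
    intro k
    induction k with
    | zero => exact ⟨x, by simp, rfl⟩
    | succ k ih =>
      obtain ⟨y, h1, h2⟩ := ih
      have hy : y ∈ Γ₂ := by
        by_contra hy
        exact H y k hy h1 h2
      obtain ⟨z, hz, rfl⟩ := hτ.surjOn hy
      refine ⟨z, ?_, h2⟩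
      intro j hj
      cases j with
      | zero => exact hz
      | succ j => exact h1 j (by omega)
  obtain ⟨y, h1, -⟩ := P n
  obtain ⟨a, b, hab, he⟩ := Fintype.exists_ne_map_eq_of_card_lt
    (fun j : Fin (n+1) => τ^[j] y) (by simp)
  have key : ∀ a b : ℕ, a < b → b ≤ n → τ^[a] y = τ^[b] y → False := by
    intro a b hab hb he
    refine hc (τ^[a] y) (h1 a (by omega)) (b - a) (by omega) ?_ ?_
    · intro j hj
      rw [← Function.iterate_add_apply]
      exact h1 _ (by omega)
    · rw [← Function.iterate_add_apply, Nat.sub_add_cancel hab.le, he]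
  have ha := a.2
  have hb := b.2
  rcases lt_or_gt_of_ne hab with h | h
  · exact key a b h (by omega) he
  · exact key b a h (by omega) he.symm

/-- For `S` symmetric and invertible, a skewsymmetric real matrix `A`
satisfying the Belavin–Drinfeld equations exists if and only if `τ` preserves `S`
and `τ` has no cycles. -/
theorem stmt_0 (n : ℕ) (hn : 1 ≤ n)
    (S : Matrix (Fin n) (Fin n) ℝ) (hSsymm : S.IsSymm) (hSinv : IsUnit S.det)
    (Γ₁ Γ₂ : Set (Fin n)) (τ : Fin n → Fin n) (hτ : Set.BijOn τ Γ₁ Γ₂) :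
    (∃ A : Matrix (Fin n) (Fin n) ℝ,
        (∀ i j, A i j = - A j i) ∧
        (∀ i ∈ Γ₁, ∀ m, A i m + A m (τ i) + S i m + S (τ i) m = 0)) ↔
    ((∀ i ∈ Γ₁, ∀ j ∈ Γ₁, S (τ i) (τ j) = S i j) ∧
     (∀ i ∈ Γ₁, ∀ k : ℕ, 1 ≤ k → (∀ j < k, τ^[j] i ∈ Γ₁) → τ^[k] i ≠ i)) := by
  have hS : ∀ i j, S i j = S j i := fun i j => (hSsymm.apply i j).symm
  constructor
  · rintro ⟨A, hA, hE⟩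
    constructor
    · intro i hi j hj
      linarith [hE i hi j, hE i hi (τ j), hE j hj i, hE j hj (τ i), hA i j, hA (τ i) (τ j),
        hS i j, hS (τ i) (τ j), hA i (τ j), hA j (τ i), hS i (τ j), hS j (τ i)]
    · intro i hi k hk hG he
      let v : Fin n → ℝ := fun x => ∑ j ∈ Finset.range k, if τ^[j] i = x then 1 else 0
      have hvS : Matrix.vecMul v S = 0 := by
        ext m
        have e1 : Matrix.vecMul v S m = ∑ j ∈ Finset.range k, S (τ^[j] i) m := by
          simp only [Matrix.vecMul, dotProduct, v, Finset.sum_mul]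
          rw [Finset.sum_comm]
          simp
        rw [e1]
        have e2 : ∀ j ∈ Finset.range k, 2 * S (τ^[j] i) m =
            (A (τ^[j+1] i) m - S (τ^[j+1] i) m) - (A (τ^[j] i) m - S (τ^[j] i) m) := by
          intro j hj
          have := hE _ (hG j (Finset.mem_range.1 hj)) m
          rw [Function.iterate_succ_apply']
          linarith [hA m (τ (τ^[j] i))]
        have e3 := Finset.sum_congr rfl e2
        rw [Finset.sum_range_sub (fun j => A (τ^[j] i) m - S (τ^[j] i) m), ← Finset.mul_sum, he] at e3
        simpa using e3
      have hv0 : v = 0 := by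
        have : Matrix.vecMul (Matrix.vecMul v S) S⁻¹ = 0 := by rw [hvS]; simp
        rwa [Matrix.vecMul_vecMul, Matrix.mul_nonsing_inv _ hSinv, Matrix.vecMul_one] at this
      have h1 : (1:ℝ) ≤ v i := by
        have := Finset.single_le_sum (f := fun j => if τ^[j] i = i then (1:ℝ) else 0)
          (fun j _ => by split_ifs <;> norm_num) (Finset.mem_range.2 (by omega : 0 < k))
        simpa [v] using this
      rw [hv0] at h1
      norm_num at h1
  · rintro ⟨hP, hc⟩
    choose r h hr hG hx using bd_exists hτ hc
    have hstep : ∀ i ∈ Γ₁, r (τ i) = r i ∧ h (τ i) = h i + 1 := by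
      intro i hi
      refine bd_unique hτ _ _ (hr _) (hr _) _ _ (hG _) ?_ ?_
      · intro j hj
        rcases Nat.lt_succ_iff_lt_or_eq.1 hj with hj | rfl
        · exact hG i j hj
        · rw [hx]; exact hi
      · rw [hx, Function.iterate_succ_apply', hx]
    have hinv : ∀ (c : ℕ) (x y : Fin n), (∀ j < c, τ^[j] x ∈ Γ₁) → (∀ j < c, τ^[j] y ∈ Γ₁) →
        S (τ^[c] x) (τ^[c] y) = S x y := by
      intro c
      induction c with
      | zero => intros; rfl
      | succ c ih =>
        intro x y h1 h2
        rw [Function.iterate_succ_apply', Function.iterate_succ_apply',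
          hP _ (h1 c (by omega)) _ (h2 c (by omega))]
        exact ih x y (fun j hj => h1 j (by omega)) (fun j hj => h2 j (by omega))
    -- entries of S in terms of roots
    have hred : ∀ (p q : Fin n) (a b : ℕ), b ≤ a → (∀ j < a, τ^[j] p ∈ Γ₁) →
        (∀ j < b, τ^[j] q ∈ Γ₁) → S (τ^[a - b] p) q = S (τ^[a] p) (τ^[b] q) := by
      intro p q a b hab h1 h2
      rw [← hinv b (τ^[a-b] p) q ?_ h2, ← Function.iterate_add_apply, Nat.add_sub_cancel' hab]
      intro j hj
      rw [← Function.iterate_add_apply]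
      exact h1 _ (by omega)
    let G : ℕ → Fin n → Fin n → ℝ := fun k p q =>
      ∑ s ∈ Finset.range k, (S (τ^[s] p) q + S (τ^[s+1] p) q)
    have Gs : ∀ k p q, G (k+1) p q = G k p q + (S (τ^[k] p) q + S (τ^[k+1] p) q) :=
      fun k p q => Finset.sum_range_succ _ _
    have G0 : ∀ p q, G 0 p q = 0 := fun p q => Finset.sum_range_zero _
    refine ⟨fun x m => G (h x - h m) (r x) (r m) - G (h m - h x) (r m) (r x),
      fun i j => by ring, ?_⟩
    intro i hi m
    obtain ⟨hr1, hh1⟩ := hstep i hi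
    have hGi := hG (τ i)
    have hxi := hx (τ i)
    rw [hr1, hh1] at hGi hxi
    simp only [hr1, hh1]
    rcases le_or_gt (h m) (h i) with hle | hlt
    · have a1 := hred (r i) (r m) (h i) (h m) hle (hG i) (hG m)
      have a2 := hred (r i) (r m) (h i + 1) (h m) (by omega) hGi (hG m)
      rw [hx, hx] at a1
      rw [hxi, hx] at a2
      have n1 : h i + 1 - h m = (h i - h m) + 1 := by omega
      have n2 : h m - h i = 0 := by omega
      have n3 : h m - (h i + 1) = 0 := by omega
      rw [n1] at a2
      rw [n1, n2, n3, Gs, G0]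
      linarith
    · have a1 := hred (r m) (r i) (h m) (h i) hlt.le (hG m) (hG i)
      have a2 := hred (r m) (r i) (h m) (h i + 1) hlt (hG m) hGi
      rw [hx, hx] at a1
      rw [hxi, hx] at a2
      have n1 : h m - h i = (h m - (h i + 1)) + 1 := by omega
      have n2 : h i - h m = 0 := by omega
      have n3 : h i + 1 - h m = 0 := by omega
      rw [n1] at a1
      rw [n1, n2, n3, Gs, G0]
      linarith [hS i m, hS (τ i) m]
end

section
/- Let C be an invertible n×n real matrix and d₁,…,d_n positive reals such that the matrix S with entries S_{ij} = d_i C_{ij} is symmetric. Then there exists an n×n real matrix b such that the matrix A := Cᵀ(b − bᵀ)C satisfies the BD equations if and only if τ preserves S and τ has no cycles (i.e., (Γ₁, Γ₂, τ) is a Belavin–Drinfeld triple). -/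
open Matrix

lemma aux_exists_skew {n : ℕ} (Γ₁ : Set (Fin n)) (τ : Fin n → Fin n)
    (S : Matrix (Fin n) (Fin n) ℝ) (hS : ∀ i j, S i j = S j i)
    (hp : ∀ i ∈ Γ₁, ∀ j ∈ Γ₁, S (τ i) (τ j) = S i j)
    (hc : ∀ i ∈ Γ₁, ∀ k : ℕ, 1 ≤ k → (∀ j < k, τ^[j] i ∈ Γ₁) → τ^[k] i ≠ i) :
    ∃ A : Matrix (Fin n) (Fin n) ℝ, Aᵀ = -A ∧
      ∀ i ∈ Γ₁, ∀ m, A (τ i) m - A i m = S i m + S (τ i) m := by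
  classical
  let e : Fin n → (Fin n → ℝ) := fun i => Pi.single i 1
  let T := Fintype.linearCombination ℝ (fun i : Γ₁ => e (τ i) - e i)
  let V := Fintype.linearCombination ℝ (fun i : Γ₁ => e i + e (τ i))
  let B : LinearMap.BilinForm ℝ (Fin n → ℝ) := Matrix.toBilin' S
  have hB : ∀ i j, B (e i) (e j) = S i j := fun i j => Matrix.toBilin'_single S i j
  have hT : LinearMap.ker T = ⊥ := by
    rw [LinearMap.ker_eq_bot']
    intro c hc0
    let c' : Fin n → ℝ := fun i => if h : i ∈ Γ₁ then c ⟨i, h⟩ else 0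
    have key : ∀ m, ∑ i : Γ₁, (c i * (if m = τ i then 1 else 0)) = c' m := by
      intro m
      have h1 := congrFun hc0 m
      simp only [T, e, Fintype.linearCombination_apply, Finset.sum_apply, Pi.smul_apply,
        Pi.sub_apply, Pi.single_apply, smul_eq_mul, Pi.zero_apply, mul_sub,
        Finset.sum_sub_distrib] at h1
      rw [sub_eq_zero.mp h1]
      by_cases hm : m ∈ Γ₁
      · simp only [c', hm, dif_pos]
        rw [Finset.sum_eq_single ⟨m, hm⟩]
        · simp
        · intro b _ hb
          rw [if_neg, mul_zero]
          rintro rfl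
          exact hb rfl
        · simp
      · simp only [c', hm, dif_neg, not_false_eq_true]
        apply Finset.sum_eq_zero
        intro b _
        rw [if_neg, mul_zero]
        rintro rfl
        exact hm b.2
    -- nonzero at m implies nonzero at some preimage
    have key2 : ∀ m, c' m ≠ 0 → ∃ i ∈ Γ₁, τ i = m ∧ c' i ≠ 0 := by
      intro m hm
      rw [← key m] at hm
      obtain ⟨i, -, hi⟩ := Finset.exists_ne_zero_of_sum_ne_zero hm
      refine ⟨i, i.2, ?_, ?_⟩
      · by_contra h
        apply hi
        rw [if_neg (fun h' => h h'.symm), mul_zero]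
      · simp only [c', i.2, dif_pos]
        exact left_ne_zero_of_mul hi
    choose! g hg1 hg2 hg3 using key2
    ext i
    by_contra hi
    have hi' : c' i ≠ 0 := by simpa [c'] using hi
    have it : ∀ k, c' (g^[k] i) ≠ 0 := by
      intro k
      induction k with
      | zero => exact hi'
      | succ k ih => rw [Function.iterate_succ_apply']; exact hg3 _ ih
    have back : ∀ j k, τ^[j] (g^[j + k] i) = g^[k] i := by
      intro j
      induction j with
      | zero => intro k; simp
      | succ j ih =>
        intro k
        rw [Function.iterate_succ_apply, show j + 1 + k = (j + k) + 1 by ring,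
          Function.iterate_succ_apply', hg2 _ (it _), ih]
    have mem : ∀ k, g^[k] i ∈ Γ₁ := by
      intro k
      by_contra h
      exact it k (by simp only [c', h, dif_neg, not_false_eq_true])
    have cyc : ∀ a b : ℕ, a < b → g^[a] i.1 = g^[b] i.1 → False := by
      intro a b hab h
      refine hc (g^[b] i) (mem b) (b - a) (by omega) ?_ ?_
      · intro j hj
        have := back j (b - j)
        rw [show j + (b - j) = b by omega] at this
        rw [this]; exact mem _
      · have := back (b - a) a
        rw [show b - a + a = b by omega] at this
        rw [this, h]
    obtain ⟨a, b, hab, h⟩ := Finite.exists_ne_map_eq_of_infinite (fun k : ℕ => g^[k] i.1)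
    rcases lt_or_gt_of_ne hab with h' | h'
    · exact cyc a b h' h
    · exact cyc b a h' h.symm
  obtain ⟨L, hL⟩ := LinearMap.exists_leftInverse_of_injective T hT
  have hskew : ∀ a b, B (V a) (T b) + B (V b) (T a) = 0 := by
    intro a b
    simp only [T, V, Fintype.linearCombination_apply, map_sum, LinearMap.sum_apply, map_smul,
      LinearMap.smul_apply, smul_eq_mul, Finset.mul_sum]
    rw [Finset.sum_comm, ← Finset.sum_add_distrib]
    apply Finset.sum_eq_zero
    intro i _
    rw [← Finset.sum_add_distrib]
    apply Finset.sum_eq_zero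
    intro j _
    simp only [map_add, map_sub, LinearMap.add_apply, hB]
    rw [hp i i.2 j j.2, hp j j.2 i i.2, hS (τ j) i, hS (τ i) j, hS j i]
    ring
  let A : (Fin n → ℝ) → (Fin n → ℝ) → ℝ := fun x y =>
    B (V (L x)) y - B (V (L y)) x - B (V (L x)) (T (L y))
  have hLu : ∀ i : Γ₁, L (e (τ i) - e i) = Pi.single i 1 := by
    intro i
    have := LinearMap.congr_fun hL (Pi.single i 1)
    simpa [T, Fintype.linearCombination_apply_single] using this
  have hTu : ∀ i : Γ₁, T (Pi.single i 1) = e (τ i) - e i := by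
    intro i; simp [T, Fintype.linearCombination_apply_single]
  have hVu : ∀ i : Γ₁, V (Pi.single i 1) = e i + e (τ i) := by
    intro i; simp [V, Fintype.linearCombination_apply_single]
  refine ⟨Matrix.of fun i j => A (e i) (e j), ?_, ?_⟩
  · ext i j
    simp only [Matrix.transpose_apply, Matrix.of_apply, Matrix.neg_apply, A]
    linarith [hskew (L (e i)) (L (e j))]
  · intro i hi m
    have h1 : A (e (τ i)) (e m) - A (e i) (e m) = A (e (τ i) - e i) (e m) := by
      simp only [A, map_sub, LinearMap.sub_apply]; ring
    simp only [Matrix.of_apply]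
    rw [h1]
    have h2 := hskew (Pi.single ⟨i, hi⟩ 1) (L (e m))
    rw [hTu ⟨i, hi⟩] at h2
    simp only [A]
    rw [hLu ⟨i, hi⟩]
    have h3 : B (V (Pi.single ⟨i, hi⟩ 1)) (e m) = S i m + S (τ i) m := by
      rw [hVu, map_add, LinearMap.add_apply, hB, hB]
    simp only at h2
    linarith

/-- For `C` invertible and `S i j = d i * C i j` symmetric with `d i > 0`,
there exists a matrix `b` such that `A := Cᵀ (b − bᵀ) C` satisfies the BD equations
if and only if `τ` preserves `S` and `τ` has no cycles. -/
theorem stmt_1 (n : ℕ) (hn : 1 ≤ n)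
    (Γ₁ Γ₂ : Set (Fin n)) (τ : Fin n → Fin n) (hτ : Set.BijOn τ Γ₁ Γ₂)
    (C : Matrix (Fin n) (Fin n) ℝ) (hC : IsUnit C.det)
    (d : Fin n → ℝ) (hd : ∀ i, 0 < d i)
    (S : Matrix (Fin n) (Fin n) ℝ) (hSdef : ∀ i j, S i j = d i * C i j)
    (hSsymm : S.IsSymm) :
    (∃ b : Matrix (Fin n) (Fin n) ℝ,
        ∀ i ∈ Γ₁, ∀ m,
          (Cᵀ * (b - bᵀ) * C) i m + (Cᵀ * (b - bᵀ) * C) m (τ i)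
            + S i m + S (τ i) m = 0) ↔
    ((∀ i ∈ Γ₁, ∀ j ∈ Γ₁, S (τ i) (τ j) = S i j) ∧
     (∀ i ∈ Γ₁, ∀ k : ℕ, 1 ≤ k → (∀ j < k, τ^[j] i ∈ Γ₁) → τ^[k] i ≠ i)) := by
  have hS : ∀ i j, S i j = S j i := fun i j => hSsymm.apply j i
  constructor
  · rintro ⟨b, hb⟩
    have hAT : (Cᵀ * (b - bᵀ) * C)ᵀ = -(Cᵀ * (b - bᵀ) * C) := by
      rw [← Matrix.neg_mul, ← Matrix.mul_neg, neg_sub]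
      simp [Matrix.transpose_mul, Matrix.mul_assoc]
    generalize Cᵀ * (b - bᵀ) * C = A at hb hAT
    have hA : ∀ i j, A i j = - A j i := fun i j => congrFun (congrFun hAT j) i
    have hE : ∀ i ∈ Γ₁, ∀ m, A (τ i) m - A i m = S i m + S (τ i) m := by
      intro i hi m
      linarith [hb i hi m, hA m (τ i)]
    constructor
    · intro i hi j hj
      linarith [hE i hi j, hE i hi (τ j), hE j hj i, hE j hj (τ i), hA i j, hA (τ i) j,
        hA i (τ j), hA (τ i) (τ j), hS i j, hS (τ i) j, hS i (τ j), hS (τ i) (τ j)]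
    · intro i hi k hk hmem hcyc
      let x : Fin n → ℝ := ∑ j ∈ Finset.range k, Pi.single (τ^[j] i) 1
      have hdet : S.det ≠ 0 := by
        have : S = Matrix.diagonal d * C := by
          ext i j; rw [Matrix.diagonal_mul, hSdef]
        rw [this, Matrix.det_mul, Matrix.det_diagonal]
        exact mul_ne_zero (Finset.prod_ne_zero_iff.mpr fun i _ => (hd i).ne') hC.ne_zero
      have hx : x ᵥ* S = 0 := by
        ext m
        have h1 : (x ᵥ* S) m = ∑ j ∈ Finset.range k, S (τ^[j] i) m := by
          simp only [x, Matrix.sum_vecMul, Finset.sum_apply]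
          apply Finset.sum_congr rfl
          intro j _
          simp
        have h2 : ∑ j ∈ Finset.range k, (A (τ^[j+1] i) m - A (τ^[j] i) m) = 0 := by
          rw [Finset.sum_range_sub (fun j => A (τ^[j] i) m)]
          simp [hcyc]
        have h3 : ∑ j ∈ Finset.range k, (S (τ^[j+1] i) m - S (τ^[j] i) m) = 0 := by
          rw [Finset.sum_range_sub (fun j => S (τ^[j] i) m)]
          simp [hcyc]
        have h4 : ∑ j ∈ Finset.range k, (A (τ^[j+1] i) m - A (τ^[j] i) m)
            = ∑ j ∈ Finset.range k, (S (τ^[j] i) m + S (τ^[j+1] i) m) := by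
          apply Finset.sum_congr rfl
          intro j hj
          rw [Function.iterate_succ_apply']
          exact hE _ (hmem j (Finset.mem_range.mp hj)) m
        rw [h2, Finset.sum_add_distrib] at h4
        rw [Finset.sum_sub_distrib] at h3
        rw [h1, Pi.zero_apply]
        linarith
      have hx0 := Matrix.eq_zero_of_vecMul_eq_zero hdet hx
      have hxi : 1 ≤ x i := by
        simp only [x, Finset.sum_apply]
        have := Finset.single_le_sum (f := fun j => (Pi.single (τ^[j] i) (1:ℝ) : Fin n → ℝ) i)
          (s := Finset.range k) (fun j _ => by
            simp only [Pi.single_apply]; split_ifs <;> norm_num)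
          (Finset.mem_range.mpr (show 0 < k by omega))
        simpa using this
      rw [hx0, Pi.zero_apply] at hxi
      linarith
  · rintro ⟨hp, hc⟩
    obtain ⟨A, hAT, hE⟩ := aux_exists_skew Γ₁ τ S hS hp hc
    have hA : ∀ i j, A i j = - A j i := fun i j => congrFun (congrFun hAT j) i
    refine ⟨(1/2 : ℝ) • ((C⁻¹)ᵀ * A * C⁻¹), ?_⟩
    have h1 : (1/2 : ℝ) • ((C⁻¹)ᵀ * A * C⁻¹) - ((1/2 : ℝ) • ((C⁻¹)ᵀ * A * C⁻¹))ᵀ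
        = (C⁻¹)ᵀ * A * C⁻¹ := by
      rw [Matrix.transpose_smul, Matrix.transpose_mul, Matrix.transpose_mul,
        Matrix.transpose_transpose, hAT, Matrix.neg_mul, Matrix.mul_neg, ← Matrix.mul_assoc,
        smul_neg, sub_neg_eq_add, ← add_smul]
      norm_num
    have h2 : Cᵀ * ((C⁻¹)ᵀ * A * C⁻¹) * C = A := by
      have h3 : Cᵀ * (C⁻¹)ᵀ = 1 := by
        rw [← Matrix.transpose_mul, Matrix.nonsing_inv_mul _ hC, Matrix.transpose_one]
      rw [Matrix.mul_assoc, Matrix.mul_assoc ((C⁻¹)ᵀ * A), Matrix.nonsing_inv_mul _ hC,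
        Matrix.mul_one, ← Matrix.mul_assoc, h3, Matrix.one_mul]
    rw [h1, h2]
    intro i hi m
    linarith [hE i hi m, hA m (τ i)]
end

section
/- Suppose S is invertible and there exists a skewsymmetric n×n real matrix A satisfying the BD equations. Then τ has no cycles: for every i ∈ Γ₁ and every k ≥ 1 such that τ^k(i) is defined, one has τ^k(i) ≠ i. -/
/-- If `S` is symmetric and invertible and a skewsymmetric matrix `A`
satisfies the BD equations, then `τ` has no cycles. -/
theorem stmt_2 (n : ℕ) (hn : 1 ≤ n)
    (S : Matrix (Fin n) (Fin n) ℝ) (hSsymm : S.IsSymm) (hSinv : IsUnit S.det)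
    (Γ₁ Γ₂ : Set (Fin n)) (τ : Fin n → Fin n) (hτ : Set.BijOn τ Γ₁ Γ₂)
    (A : Matrix (Fin n) (Fin n) ℝ) (hAskew : ∀ i j, A i j = - A j i)
    (hBD : ∀ i ∈ Γ₁, ∀ m, A i m + A m (τ i) + S i m + S (τ i) m = 0) :
    ∀ i ∈ Γ₁, ∀ k : ℕ, 1 ≤ k → (∀ j < k, τ^[j] i ∈ Γ₁) → τ^[k] i ≠ i := by
  intro i hi k hk hdef hcyc
  have key : ∀ m, ∑ j ∈ Finset.range k, S (τ^[j] i) m = 0 := by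
    intro m
    have h1 : ∀ j ∈ Finset.range k,
        S (τ^[j] i) m + S (τ^[j+1] i) m = A (τ^[j+1] i) m - A (τ^[j] i) m := by
      intro j hj
      have h := hBD _ (hdef j (Finset.mem_range.mp hj)) m
      have h2 := hAskew m (τ (τ^[j] i))
      rw [Function.iterate_succ_apply']
      linarith
    have h3 := Finset.sum_congr rfl h1
    rw [Finset.sum_range_sub (fun j => A (τ^[j] i) m), Finset.sum_add_distrib] at h3
    have h4 := Finset.sum_range_sub (fun j => S (τ^[j] i) m) k
    rw [Finset.sum_sub_distrib] at h4
    simp only [hcyc, Function.iterate_zero, id_eq, sub_self] at h3 h4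
    linarith
  have hv := Matrix.eq_zero_of_vecMul_eq_zero (M := S) hSinv.ne_zero
    (v := ∑ j ∈ Finset.range k, Pi.single (τ^[j] i) 1) (by
      ext m
      rw [Matrix.sum_vecMul]
      simpa using key m)
  have h0 := congrFun hv i
  rw [Finset.sum_apply, Pi.zero_apply, Finset.sum_eq_zero_iff_of_nonneg] at h0
  · have := h0 0 (Finset.mem_range.mpr hk)
    simp at this
  · intro j _
    rw [Pi.single_apply]
    split_ifs <;> norm_num
end

section
/- Suppose a skewsymmetric n×n real matrix A satisfies the BD equations, and suppose i ∈ Γ₁ and k ≥ 1 are such that τ^k(i) is defined and τ^k(i) = i. Then for every m ∈ {1,…,n} the sum over the cycle vanishes: ∑_{j=0}^{k−1} S_{τ^j(i), m} = 0. -/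
/-- If a skewsymmetric `A` satisfies the BD equations and
`τ^k(i)` is defined with `τ^k(i) = i`, then `∑_{j=0}^{k-1} S_{τ^j(i), m} = 0`
for every `m`. -/
theorem stmt_3 (n : ℕ) (hn : 1 ≤ n)
    (S : Matrix (Fin n) (Fin n) ℝ) (hSsymm : S.IsSymm)
    (Γ₁ Γ₂ : Set (Fin n)) (τ : Fin n → Fin n) (hτ : Set.BijOn τ Γ₁ Γ₂)
    (A : Matrix (Fin n) (Fin n) ℝ) (hAskew : ∀ i j, A i j = - A j i)
    (hBD : ∀ i ∈ Γ₁, ∀ m, A i m + A m (τ i) + S i m + S (τ i) m = 0)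
    (i : Fin n) (hi : i ∈ Γ₁) (k : ℕ) (hk : 1 ≤ k)
    (hdef : ∀ j < k, τ^[j] i ∈ Γ₁) (hcycle : τ^[k] i = i) :
    ∀ m, ∑ j ∈ Finset.range k, S (τ^[j] i) m = 0 := by
  intro m
  have key : ∀ l ≤ k, 2 * ∑ j ∈ Finset.range l, S (τ^[j] i) m
      = S i m - S (τ^[l] i) m + A (τ^[l] i) m - A i m := by
    intro l
    induction l with
    | zero => intro _; simp
    | succ l ih =>
      intro hl
      have h1 := ih (by omega)
      have h2 := hBD _ (hdef l (by omega)) m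
      have h3 := hAskew m (τ (τ^[l] i))
      rw [Finset.sum_range_succ, Function.iterate_succ_apply']
      linarith
  have h := key k le_rfl
  rw [hcycle] at h
  linarith
end

section
/- Suppose a skewsymmetric n×n real matrix A satisfies the BD equations. Then τ preserves S: for all i, m ∈ Γ₁ one has S_{τ(i)τ(m)} = S_{im}. -/
/-- If a skewsymmetric `A` satisfies the BD equations, then `τ`
preserves `S` on `Γ₁`. -/
theorem stmt_4 (n : ℕ) (hn : 1 ≤ n)
    (S : Matrix (Fin n) (Fin n) ℝ) (hSsymm : S.IsSymm)
    (Γ₁ Γ₂ : Set (Fin n)) (τ : Fin n → Fin n) (hτ : Set.BijOn τ Γ₁ Γ₂)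
    (A : Matrix (Fin n) (Fin n) ℝ) (hAskew : ∀ i j, A i j = - A j i)
    (hBD : ∀ i ∈ Γ₁, ∀ m, A i m + A m (τ i) + S i m + S (τ i) m = 0) :
    ∀ i ∈ Γ₁, ∀ m ∈ Γ₁, S (τ i) (τ m) = S i m := by
  intro i hi m hm
  have h1 := hBD i hi m
  have h2 := hBD i hi (τ m)
  have h3 := hBD m hm i
  have h4 := hBD m hm (τ i)
  have a1 := hAskew i m
  have a2 := hAskew (τ i) m
  have a3 := hAskew i (τ m)
  have a4 := hAskew (τ i) (τ m)
  have s1 := hSsymm.apply i m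
  have s2 := hSsymm.apply (τ i) m
  have s3 := hSsymm.apply i (τ m)
  have s4 := hSsymm.apply (τ i) (τ m)
  linarith
end

section
/- Suppose a skewsymmetric n×n real matrix A satisfies the BD equations. Then A is invariant under τ on Γ₁: for all i, m ∈ Γ₁ one has A_{τ(i)τ(m)} = A_{im}. -/
/-- If a skewsymmetric `A` satisfies the BD equations, then `A` is
invariant under `τ` on `Γ₁`. -/
theorem stmt_5 (n : ℕ) (hn : 1 ≤ n)
    (S : Matrix (Fin n) (Fin n) ℝ) (hSsymm : S.IsSymm)
    (Γ₁ Γ₂ : Set (Fin n)) (τ : Fin n → Fin n) (hτ : Set.BijOn τ Γ₁ Γ₂)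
    (A : Matrix (Fin n) (Fin n) ℝ) (hAskew : ∀ i j, A i j = - A j i)
    (hBD : ∀ i ∈ Γ₁, ∀ m, A i m + A m (τ i) + S i m + S (τ i) m = 0) :
    ∀ i ∈ Γ₁, ∀ m ∈ Γ₁, A (τ i) (τ m) = A i m := by
  intro i hi m hm
  have e1 := hBD i hi m
  have e2 := hBD i hi (τ m)
  have e3 := hBD m hm i
  have e4 := hBD m hm (τ i)
  have s1 := hSsymm.apply i m
  have s2 := hSsymm.apply i (τ m)
  have s3 := hSsymm.apply (τ i) m
  have s4 := hSsymm.apply (τ i) (τ m)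
  have a1 := hAskew i m
  have a2 := hAskew i (τ m)
  have a3 := hAskew (τ i) m
  have a4 := hAskew (τ i) (τ m)
  linarith
end

section
/- Suppose τ preserves S and τ has no cycles. Then there exists a skewsymmetric n×n real matrix A satisfying the BD equations. -/
theorem aux_wf (n : ℕ) (Γ₁ : Set (Fin n)) (τ : Fin n → Fin n)
    (hnc : ∀ i ∈ Γ₁, ∀ k : ℕ, 1 ≤ k → (∀ j < k, τ^[j] i ∈ Γ₁) → τ^[k] i ≠ i) :
    WellFounded (fun x y : Fin n => x ∈ Γ₁ ∧ τ x = y) := by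
  set R : Fin n → Fin n → Prop := fun x y => x ∈ Γ₁ ∧ τ x = y with hR
  have key : ∀ x y, Relation.TransGen R x y →
      ∃ k : ℕ, 1 ≤ k ∧ (∀ j < k, τ^[j] x ∈ Γ₁) ∧ τ^[k] x = y := by
    intro x y h
    induction h with
    | single h => exact ⟨1, le_rfl, fun j hj => by
        obtain rfl : j = 0 := by omega
        exact h.1, h.2⟩
    | tail _ h ih =>
      obtain ⟨k, hk, h1, h2⟩ := ih
      refine ⟨k + 1, by omega, fun j hj => ?_, ?_⟩
      · rcases Nat.lt_succ_iff_lt_or_eq.mp hj with h3 | h3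
        · exact h1 j h3
        · rw [h3, h2]; exact h.1
      · rw [Function.iterate_succ_apply', h2]; exact h.2
  have hirr : Std.Irrefl (Relation.TransGen R) := ⟨fun x hx => by
    obtain ⟨k, hk, h1, h2⟩ := key x x hx
    exact hnc x (h1 0 (by omega)) k hk h1 h2⟩
  have hw : WellFounded (Relation.TransGen R) := Finite.wellFounded_of_trans_of_irrefl _
  exact Subrelation.wf (fun h => Relation.TransGen.single h) hw

/-- If `τ` preserves the symmetric matrix `S` and has no cycles,
then there exists a skewsymmetric matrix `A` satisfying the BD equations. -/
theorem stmt_6 (n : ℕ) (hn : 1 ≤ n)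
    (S : Matrix (Fin n) (Fin n) ℝ) (hSsymm : S.IsSymm)
    (Γ₁ Γ₂ : Set (Fin n)) (τ : Fin n → Fin n) (hτ : Set.BijOn τ Γ₁ Γ₂)
    (hpres : ∀ i ∈ Γ₁, ∀ j ∈ Γ₁, S (τ i) (τ j) = S i j)
    (hnc : ∀ i ∈ Γ₁, ∀ k : ℕ, 1 ≤ k → (∀ j < k, τ^[j] i ∈ Γ₁) → τ^[k] i ≠ i) :
    ∃ A : Matrix (Fin n) (Fin n) ℝ,
      (∀ i j, A i j = - A j i) ∧
      (∀ i ∈ Γ₁, ∀ m, A i m + A m (τ i) + S i m + S (τ i) m = 0) := by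
  classical
  have wf := aux_wf n Γ₁ τ hnc
  have hS : ∀ i j, S i j = S j i := fun i j => hSsymm.apply j i
  obtain ⟨r, F, hr, hF, hr0, hF0⟩ : ∃ (r : Fin n → Fin n) (F : Fin n → Fin n → ℝ),
      (∀ i ∈ Γ₁, r (τ i) = r i) ∧ (∀ i ∈ Γ₁, ∀ m, F (τ i) m = F i m + S i m + S (τ i) m) ∧
      (∀ i, (¬ ∃ x, x ∈ Γ₁ ∧ τ x = i) → r i = i) ∧
      (∀ i, (¬ ∃ x, x ∈ Γ₁ ∧ τ x = i) → ∀ m, F i m = 0) := by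
    let step : (y : Fin n) → ((x : Fin n) → (x ∈ Γ₁ ∧ τ x = y) → Fin n × (Fin n → ℝ)) →
        Fin n × (Fin n → ℝ) := fun y ih =>
      if h : ∃ x, x ∈ Γ₁ ∧ τ x = y then
        ((ih h.choose h.choose_spec).1,
          fun m => (ih h.choose h.choose_spec).2 m + S h.choose m + S y m)
      else (y, fun _ => 0)
    let g : Fin n → Fin n × (Fin n → ℝ) := wf.fix step
    have hg : ∀ y, g y = step y (fun x _ => g x) := fun y => wf.fix_eq step y
    have hpos : ∀ i ∈ Γ₁, g (τ i) = ((g i).1, fun m => (g i).2 m + S i m + S (τ i) m) := by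
      intro i hi
      have h : ∃ x, x ∈ Γ₁ ∧ τ x = τ i := ⟨i, hi, rfl⟩
      have hc : h.choose = i := hτ.injOn h.choose_spec.1 hi h.choose_spec.2
      rw [hg (τ i)]
      simp only [step]
      rw [dif_pos h, hc]
    have hneg : ∀ i, (¬ ∃ x, x ∈ Γ₁ ∧ τ x = i) → g i = (i, fun _ => 0) := by
      intro i h
      rw [hg i]
      simp only [step]
      rw [dif_neg h]
    refine ⟨fun i => (g i).1, fun i => (g i).2, ?_, ?_, ?_, ?_⟩
    · intro i hi; simp only [hpos i hi]
    · intro i hi m; simp only [hpos i hi]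
    · intro i hi; simp only [hneg i hi]
    · intro i hi m; simp only [hneg i hi]
  have H : ∀ i j, F i j + F j i = F i (r j) + F j (r i) := by
    intro i
    induction i using wf.induction with
    | _ i ihi =>
    intro j
    induction j using wf.induction with
    | _ j ihj =>
    by_cases hi : ∃ x, x ∈ Γ₁ ∧ τ x = i
    · by_cases hj : ∃ x, x ∈ Γ₁ ∧ τ x = j
      · obtain ⟨x, hx, rfl⟩ := hi
        obtain ⟨y, hy, rfl⟩ := hj
        have h1 := ihi x ⟨hx, rfl⟩ (τ y)
        have h2 := ihj y ⟨hy, rfl⟩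
        have h3 := ihi x ⟨hx, rfl⟩ y
        have h4 := hpres x hx y hy
        simp only [hr x hx, hr y hy, hF x hx, hF y hy] at h1 h2 h3 ⊢
        rw [hS y x, hS (τ y) (τ x), hS y (τ x), hS (τ y) x] at *
        linarith
      · simp only [hr0 j hj, hF0 j hj]
    · simp only [hr0 i hi, hF0 i hi]
  refine ⟨fun i j => F i j - F j (r i), fun i j => ?_, fun i hi m => ?_⟩
  · have := H i j
    simp only; linarith
  · have := H m (τ i)
    have h2 := hF i hi m
    simp only [hr i hi] at this ⊢
    linarith
end

section
/- Suppose τ preserves S and τ has no cycles. Define Γ₁⁽⁰⁾ = Γ₁, Γ₂⁽ᵏ⁾ = τ(Γ₁⁽ᵏ⁾), and Γ₁⁽ᵏ⁺¹⁾ = Γ₁⁽ᵏ⁾ ∩ Γ₂⁽ᵏ⁾. Then for every k ≥ 1: (i) for each j ∈ Γ₂⁽ᵏ⁻¹⁾ the iterated preimages τ⁻¹(j), τ⁻²(j), …, τ⁻ᵏ(j) all exist and lie in Γ₁, so the set Γ̃₁⁽ᵏ⁻¹⁾ := τ⁻ᵏ(Γ₂⁽ᵏ⁻¹⁾) is a well-defined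 subset of Γ₁ on which all k iterates of τ are defined; (ii) τᵏ maps Γ̃₁⁽ᵏ⁻¹⁾ bijectively onto Γ₂⁽ᵏ⁻¹⁾ ⊆ Γ₂; (iii) τᵏ restricted to Γ̃₁⁽ᵏ⁻¹⁾ preserves S; and (iv) τᵏ restricted to Γ̃₁⁽ᵏ⁻¹⁾ has no cycles. In other words, (Γ̃₁⁽ᵏ⁻¹⁾, Γ₂⁽ᵏ⁻¹⁾, τᵏ) is again a Belavin–Drinfeld triple. -/
/-- If `τ` preserves `S` and has no cycles, then for every `k ≥ 1`
(written below as `k + 1` with `k : ℕ`), the triple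
`(Γ̃₁⁽ᵏ⁾, Γ₂⁽ᵏ⁾, τ^{k+1})` is again a Belavin–Drinfeld triple, where
`Γ₁⁽⁰⁾ = Γ₁`, `Γ₂⁽ᵏ⁾ = τ(Γ₁⁽ᵏ⁾)`, `Γ₁⁽ᵏ⁺¹⁾ = Γ₁⁽ᵏ⁾ ∩ Γ₂⁽ᵏ⁾`, and
`Γ̃₁⁽ᵏ⁾ = τ⁻⁽ᵏ⁺¹⁾(Γ₂⁽ᵏ⁾)` (the set of `i ∈ Γ₁` on which all `k + 1` iterates of
`τ` are defined and whose `(k+1)`-st iterate lies in `Γ₂⁽ᵏ⁾`). -/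
theorem stmt_9 (n : ℕ) (hn : 1 ≤ n)
    (S : Matrix (Fin n) (Fin n) ℝ) (hSsymm : S.IsSymm)
    (Γ₁ Γ₂ : Set (Fin n)) (τ : Fin n → Fin n) (hτ : Set.BijOn τ Γ₁ Γ₂)
    (hpres : ∀ i ∈ Γ₁, ∀ j ∈ Γ₁, S (τ i) (τ j) = S i j)
    (hnc : ∀ i ∈ Γ₁, ∀ k : ℕ, 1 ≤ k → (∀ j < k, τ^[j] i ∈ Γ₁) → τ^[k] i ≠ i)
    (G₁ : ℕ → Set (Fin n)) (hG0 : G₁ 0 = Γ₁)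
    (hGsucc : ∀ k, G₁ (k + 1) = G₁ k ∩ (τ '' G₁ k)) :
    ∀ k : ℕ, ∀ Γt : Set (Fin n),
      Γt = {i | i ∈ Γ₁ ∧ (∀ m < k + 1, τ^[m] i ∈ Γ₁) ∧ τ^[k + 1] i ∈ τ '' G₁ k} →
      -- (i) all `k+1` iterated preimages of any `j ∈ Γ₂⁽ᵏ⁾` exist and lie in `Γ₁`
      ((∀ j ∈ τ '' G₁ k,
          ∃ i ∈ Γ₁, (∀ m < k + 1, τ^[m] i ∈ Γ₁) ∧ τ^[k + 1] i = j) ∧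
      -- (ii) `τ^{k+1}` maps `Γ̃₁⁽ᵏ⁾` bijectively onto `Γ₂⁽ᵏ⁾ ⊆ Γ₂`
      (Set.BijOn (τ^[k + 1]) Γt (τ '' G₁ k) ∧ τ '' G₁ k ⊆ Γ₂) ∧
      -- (iii) `τ^{k+1}` restricted to `Γ̃₁⁽ᵏ⁾` preserves `S`
      (∀ i ∈ Γt, ∀ j ∈ Γt, S (τ^[k + 1] i) (τ^[k + 1] j) = S i j) ∧
      -- (iv) `τ^{k+1}` restricted to `Γ̃₁⁽ᵏ⁾` has no cycles
      (∀ i ∈ Γt, ∀ m : ℕ, 1 ≤ m →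
          (∀ l < m, (τ^[k + 1])^[l] i ∈ Γt) → (τ^[k + 1])^[m] i ≠ i)) := by
  have hsub : ∀ k, G₁ k ⊆ Γ₁ := by
    intro k
    induction k with
    | zero => rw [hG0]
    | succ k ih => rw [hGsucc]; exact fun x hx => ih hx.1
  have hpre : ∀ k, ∀ j ∈ τ '' G₁ k,
      ∃ i ∈ Γ₁, (∀ m < k + 1, τ^[m] i ∈ Γ₁) ∧ τ^[k + 1] i = j := by
    intro k
    induction k with
    | zero =>
      rintro j ⟨a, ha, rfl⟩
      have ha' := hsub 0 ha
      refine ⟨a, ha', ?_, rfl⟩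
      intro m hm
      obtain rfl : m = 0 := by omega
      exact ha'
    | succ k ih =>
      rintro j ⟨a, ha, rfl⟩
      have ha' := hsub _ ha
      rw [hGsucc] at ha
      obtain ⟨i, hi, hm, he⟩ := ih a ha.2
      refine ⟨i, hi, ?_, ?_⟩
      · intro m hlt
        rcases Nat.lt_succ_iff_lt_or_eq.mp hlt with h | h
        · exact hm m h
        · rw [h, he]; exact ha'
      · rw [Function.iterate_succ_apply', he]
  have hinj : ∀ K i j, (∀ m < K, τ^[m] i ∈ Γ₁) → (∀ m < K, τ^[m] j ∈ Γ₁) →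
      τ^[K] i = τ^[K] j → i = j := by
    intro K
    induction K with
    | zero => intro i j _ _ h; exact h
    | succ K ih =>
      intro i j hi hj h
      rw [Function.iterate_succ_apply', Function.iterate_succ_apply'] at h
      exact ih i j (fun m hm => hi m (by omega)) (fun m hm => hj m (by omega))
        (hτ.injOn (hi K (by omega)) (hj K (by omega)) h)
  have hS : ∀ K i j, (∀ m < K, τ^[m] i ∈ Γ₁) → (∀ m < K, τ^[m] j ∈ Γ₁) →
      S (τ^[K] i) (τ^[K] j) = S i j := by
    intro K
    induction K with
    | zero => intro i j _ _; rfl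
    | succ K ih =>
      intro i j hi hj
      rw [Function.iterate_succ_apply', Function.iterate_succ_apply',
        hpres _ (hi K (by omega)) _ (hj K (by omega))]
      exact ih i j (fun m hm => hi m (by omega)) (fun m hm => hj m (by omega))
  intro k Γt hΓ
  subst hΓ
  refine ⟨hpre k, ⟨⟨?_, ?_, ?_⟩, ?_⟩, ?_, ?_⟩
  · exact fun i hi => hi.2.2
  · exact fun i hi j hj h => hinj _ i j hi.2.1 hj.2.1 h
  · intro j hj
    obtain ⟨i, hi, hm, he⟩ := hpre k j hj
    exact ⟨i, ⟨hi, hm, by rw [he]; exact hj⟩, he⟩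
  · rintro _ ⟨a, ha, rfl⟩
    exact hτ.mapsTo (hsub k ha)
  · exact fun i hi j hj => hS _ i j hi.2.1 hj.2.1
  · intro i hi m hm hl
    rw [← Function.iterate_mul]
    apply hnc i hi.1 _ (Nat.mul_pos (Nat.succ_pos k) hm)
    intro j hj
    have h1 := (hl (j / (k + 1)) (Nat.div_lt_of_lt_mul hj)).2.1 (j % (k + 1))
      (Nat.mod_lt _ (Nat.succ_pos k))
    rw [← Function.iterate_mul, ← Function.iterate_add_apply, Nat.mod_add_div] at h1
    exact h1
end

section
/- Let x and y be nilpotent elements of R satisfying x·y = q·(y·x). Then x + y is nilpotent and exp_q(y)·exp_q(x) = exp_q(x+y). -/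
/-- The `q`-factorial `k_q! = 1_q · 2_q ⋯ k_q`, where
`k_q = (q^k − 1)/(q − 1) = 1 + q + ⋯ + q^{k−1}` (and `0_q! = 1`). -/
def qFactorial {K : Type*} [Field K] (q : K) : ℕ → K
  | 0 => 1
  | k + 1 => qFactorial q k * (∑ j ∈ Finset.range (k + 1), q ^ j)

/-- The `q`-exponential of a nilpotent element `u`:
`exp_q(u) = ∑_{k ≥ 0} u^k / k_q!`, a finite sum since `u` is nilpotent
(all terms with `k ≥ nilpotencyClass u` vanish). -/
noncomputable def qExp {K : Type*} [Field K] {R : Type*} [Ring R] [Algebra K R]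
    (q : K) (u : R) : R :=
  ∑ k ∈ Finset.range (nilpotencyClass u), (qFactorial q k)⁻¹ • u ^ k

section helpers

variable {K : Type*} [Field K] {R : Type*} [Ring R] [Algebra K R]

/-- divided power -/
noncomputable def qDiv (q : K) (u : R) (n : ℕ) : R := (qFactorial q n)⁻¹ • u ^ n

/-- q-number -/
def qNum (q : K) (n : ℕ) : K := ∑ j ∈ Finset.range n, q ^ j

lemma qNum_ne (q : K) (hq : ∀ k : ℕ, 1 ≤ k → q ^ k ≠ 1) (n : ℕ) : qNum q (n + 1) ≠ 0 := by
  intro h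
  have h1 := geom_sum_mul q (n + 1)
  unfold qNum at h
  rw [h, zero_mul] at h1
  exact hq (n + 1) (by omega) (sub_eq_zero.mp h1.symm)

lemma qFactorial_ne (q : K) (hq : ∀ k : ℕ, 1 ≤ k → q ^ k ≠ 1) (n : ℕ) : qFactorial q n ≠ 0 := by
  induction n with
  | zero => simp [qFactorial]
  | succ n ih => exact mul_ne_zero ih (qNum_ne q hq n)

lemma qDiv_succ (q : K) (hq : ∀ k : ℕ, 1 ≤ k → q ^ k ≠ 1) (u : R) (n : ℕ) :
    qNum q (n + 1) • qDiv q u (n + 1) = qDiv q u n * u := by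
  have h := qNum_ne q hq n
  have h2 : qFactorial q (n + 1) = qFactorial q n * qNum q (n + 1) := rfl
  unfold qDiv
  rw [h2, smul_smul, smul_mul_assoc, ← pow_succ, mul_inv]
  congr 1
  field_simp

lemma pow_comm_q (q : K) (x y : R) (hxy : x * y = q • (y * x)) (n : ℕ) :
    x ^ n * y = q ^ n • (y * x ^ n) := by
  induction n with
  | zero => simp
  | succ n ih =>
    rw [pow_succ, mul_assoc, hxy, mul_smul_comm, ← mul_assoc, ih, smul_mul_assoc, smul_smul,
      mul_assoc, ← pow_succ']

lemma qNum_add (q : K) (a b : ℕ) : qNum q (a + b) = qNum q b + q ^ b * qNum q a := by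
  unfold qNum
  rw [add_comm a b, Finset.sum_range_add, Finset.mul_sum]
  simp [pow_add]

lemma qSum_succ (q : K) (hq : ∀ k : ℕ, 1 ≤ k → q ^ k ≠ 1) (x y : R)
    (hxy : x * y = q • (y * x)) (n : ℕ) :
    qNum q (n + 1) • ∑ p ∈ Finset.HasAntidiagonal.antidiagonal (n + 1), qDiv q y p.1 * qDiv q x p.2
      = (∑ p ∈ Finset.HasAntidiagonal.antidiagonal n, qDiv q y p.1 * qDiv q x p.2) * (x + y) := by
  have h0 : qNum q 0 = 0 := by simp [qNum]
  have h1 : qNum q (n + 1) • ∑ p ∈ Finset.HasAntidiagonal.antidiagonal (n + 1), qDiv q y p.1 * qDiv q x p.2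
      = ∑ p ∈ Finset.HasAntidiagonal.antidiagonal (n + 1), qNum q p.2 • (qDiv q y p.1 * qDiv q x p.2)
      + ∑ p ∈ Finset.HasAntidiagonal.antidiagonal (n + 1),
          (q ^ p.2 * qNum q p.1) • (qDiv q y p.1 * qDiv q x p.2) := by
    rw [Finset.smul_sum, ← Finset.sum_add_distrib]
    refine Finset.sum_congr rfl fun p hp => ?_
    rw [← Finset.HasAntidiagonal.mem_antidiagonal.mp hp, qNum_add, add_smul]
  rw [h1, Finset.Nat.sum_antidiagonal_succ', Finset.Nat.sum_antidiagonal_succ]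
  simp only [h0, zero_smul, mul_zero, zero_add, add_zero]
  rw [mul_add, Finset.sum_mul, Finset.sum_mul]
  congr 1
  · refine Finset.sum_congr rfl fun p _ => ?_
    rw [← mul_smul_comm, qDiv_succ q hq, mul_assoc]
  · refine Finset.sum_congr rfl fun p _ => ?_
    have h2 : qDiv q x p.2 * y = q ^ p.2 • (y * qDiv q x p.2) := by
      unfold qDiv
      rw [smul_mul_assoc, pow_comm_q q x y hxy, mul_smul_comm, smul_comm]
    rw [mul_assoc, h2, mul_smul_comm, ← mul_assoc, ← qDiv_succ q hq, smul_mul_assoc, smul_smul]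

lemma qDiv_add (q : K) (hq : ∀ k : ℕ, 1 ≤ k → q ^ k ≠ 1) (x y : R)
    (hxy : x * y = q • (y * x)) (n : ℕ) :
    qDiv q (x + y) n = ∑ p ∈ Finset.HasAntidiagonal.antidiagonal n, qDiv q y p.1 * qDiv q x p.2 := by
  induction n with
  | zero => simp [qDiv, qFactorial]
  | succ n ih =>
    apply smul_right_injective R (qNum_ne q hq n)
    simp only
    rw [qSum_succ q hq x y hxy, qDiv_succ q hq, ih]

lemma qDiv_zero (q : K) (u : R) {a n : ℕ} (h : u ^ a = 0) (han : a ≤ n) : qDiv q u n = 0 := by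
  rw [qDiv, pow_eq_zero_of_le han h, smul_zero]

lemma qExp_eq (q : K) (u : R) {a n : ℕ} (h : u ^ a = 0) (han : a ≤ n) :
    qExp q u = ∑ k ∈ Finset.range n, qDiv q u k := by
  have hu : IsNilpotent u := ⟨a, h⟩
  have h1 : u ^ nilpotencyClass u = 0 := pow_nilpotencyClass hu
  have h2 : nilpotencyClass u ≤ n := (Nat.sInf_le h : nilpotencyClass u ≤ a).trans han
  unfold qExp
  refine Finset.sum_subset (Finset.range_mono h2) fun k _ hk => ?_
  exact qDiv_zero q u h1 (by simpa using hk)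

end helpers

/-- If `x` and `y` are nilpotent and `x y = q (y x)`, then `x + y`
is nilpotent and `exp_q(y) exp_q(x) = exp_q(x + y)`. -/
theorem stmt_10 {K : Type*} [Field K] [CharZero K]
    (q : K) (hq : ∀ k : ℕ, 1 ≤ k → q ^ k ≠ 1)
    {R : Type*} [Ring R] [Algebra K R]
    (x y : R) (hx : IsNilpotent x) (hy : IsNilpotent y)
    (hxy : x * y = q • (y * x)) :
    IsNilpotent (x + y) ∧ qExp q y * qExp q x = qExp q (x + y) := by
  obtain ⟨a, ha⟩ := hx
  obtain ⟨b, hb⟩ := hy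
  have hz : (x + y) ^ (a + b) = 0 := by
    have h1 : qDiv q (x + y) (a + b) = 0 := by
      rw [qDiv_add q hq x y hxy]
      refine Finset.sum_eq_zero fun p hp => ?_
      have hp' := Finset.HasAntidiagonal.mem_antidiagonal.mp hp
      rcases le_or_gt b p.1 with h | h
      · rw [qDiv_zero q y hb h, zero_mul]
      · rw [qDiv_zero q x ha (by omega), mul_zero]
    exact (smul_eq_zero.mp h1).resolve_left (inv_ne_zero (qFactorial_ne q hq _))
  refine ⟨⟨_, hz⟩, ?_⟩
  rw [qExp_eq q y hb le_rfl, qExp_eq q x ha le_rfl, qExp_eq q (x + y) hz le_rfl,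
    Finset.sum_mul_sum, ← Finset.sum_product',
    ← Finset.sum_fiberwise_of_maps_to (t := Finset.range (a + b)) (g := fun p => p.1 + p.2)]
  · refine Finset.sum_congr rfl fun n _ => ?_
    rw [qDiv_add q hq x y hxy]
    refine Finset.sum_subset ?_ ?_
    · intro p hp
      simpa using (Finset.mem_filter.mp hp).2
    · intro p hp hp2
      have hp' := Finset.HasAntidiagonal.mem_antidiagonal.mp hp
      simp only [Finset.mem_filter, Finset.mem_product, Finset.mem_range] at hp2
      rcases le_or_gt b p.1 with h | h
      · rw [qDiv_zero q y hb h, zero_mul]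
      · rw [qDiv_zero q x ha (by by_contra h3; exact hp2 ⟨⟨h, by omega⟩, hp'⟩), mul_zero]
  · intro p hp
    simp only [Finset.mem_product, Finset.mem_range] at hp ⊢
    omega
end
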